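/- arXiv:1510.07098 — 6 statements merged into one kernel-verified Lean document; each statement's English description precedes it below -/
import Mathlib

section
/- Let ℰ be an exact structure on an abelian category 𝒜 such that 𝒜 has enough ℰ-projectives and enough ℰ-injectives, and let X → Y → Z be composable morphisms in 𝒜. Then the sequence 0 → X → Y → Z → 0 is a conflation (i.e., belongs to ℰ) if and only if for every ℰ-projective object P the induced sequence of abelian groups 0 → Hom(P,X) → Hom(P,Y) → Hom(P,Z) → 0 is exact. -/
open CategoryTheory Category Limits

universe v u

namespace ExactPaper

variable {𝒜 : Type u} [Category.{v} 𝒜] [Abelian 𝒜]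

/-- A morphism is an admissible monic w.r.t. a class `c` of short complexes if it occurs
as the first map of a member of `c`. -/
def AdmMono (c : ShortComplex 𝒜 → Prop) {X Y : 𝒜} (f : X ⟶ Y) : Prop :=
  ∃ (Z : 𝒜) (g : Y ⟶ Z) (w : f ≫ g = 0), c (ShortComplex.mk f g w)

/-- A morphism is an admissible epic w.r.t. a class `c` of short complexes if it occurs
as the second map of a member of `c`. -/
def AdmEpi (c : ShortComplex 𝒜 → Prop) {Y Z : 𝒜} (g : Y ⟶ Z) : Prop :=
  ∃ (X : 𝒜) (f : X ⟶ Y) (w : f ≫ g = 0), c (ShortComplex.mk f g w)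

/-- A (Quillen) exact structure on an abelian category `𝒜`: a class of short exact
sequences, called conflations, closed under isomorphisms, containing all split short
exact sequences, such that admissible monics and epics are closed under composition,
pushouts of admissible monics along arbitrary morphisms are admissible monics and
pullbacks of admissible epics along arbitrary morphisms are admissible epics. -/
structure ExactStructure (𝒜 : Type u) [Category.{v} 𝒜] [Abelian 𝒜] where
  conflation : ShortComplex 𝒜 → Prop
  shortExact_of_conflation : ∀ (S : ShortComplex 𝒜), conflation S → S.ShortExact
  conflation_of_iso : ∀ (S T : ShortComplex 𝒜), (S ≅ T) → conflation S → conflation T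
  conflation_of_splitting : ∀ (S : ShortComplex 𝒜), S.Splitting → conflation S
  admMono_comp : ∀ {X Y Z : 𝒜} (f : X ⟶ Y) (g : Y ⟶ Z),
    AdmMono conflation f → AdmMono conflation g → AdmMono conflation (f ≫ g)
  admEpi_comp : ∀ {X Y Z : 𝒜} (f : X ⟶ Y) (g : Y ⟶ Z),
    AdmEpi conflation f → AdmEpi conflation g → AdmEpi conflation (f ≫ g)
  admMono_pushout : ∀ {L M M' : 𝒜} (i : L ⟶ M) (f : L ⟶ M'),
    AdmMono conflation i → AdmMono conflation (pushout.inr i f)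
  admEpi_pullback : ∀ {M N M' : 𝒜} (p : M ⟶ N) (g : M' ⟶ N),
    AdmEpi conflation p → AdmEpi conflation (pullback.snd p g)

namespace ExactStructure

variable (E : ExactStructure 𝒜)

/-- An `ℰ`-projective object. -/
def EProjective (P : 𝒜) : Prop :=
  ∀ (S : ShortComplex 𝒜), E.conflation S → ∀ h : P ⟶ S.X₃, ∃ k : P ⟶ S.X₂, k ≫ S.g = h

/-- An `ℰ`-injective object. -/
def EInjective (I : 𝒜) : Prop :=
  ∀ (S : ShortComplex 𝒜), E.conflation S → ∀ h : S.X₁ ⟶ I, ∃ k : S.X₂ ⟶ I, S.f ≫ k = h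

/-- `𝒜` has enough `ℰ`-projectives. -/
def EnoughProjectives : Prop :=
  ∀ M : 𝒜, ∃ (K P : 𝒜) (i : K ⟶ P) (p : P ⟶ M) (w : i ≫ p = 0),
    E.conflation (ShortComplex.mk i p w) ∧ E.EProjective P

/-- `𝒜` has enough `ℰ`-injectives. -/
def EnoughInjectives : Prop :=
  ∀ M : 𝒜, ∃ (I C : 𝒜) (i : M ⟶ I) (p : I ⟶ C) (w : i ≫ p = 0),
    E.conflation (ShortComplex.mk i p w) ∧ E.EInjective I

/-- `Ext¹_ℰ(M,N) = 0`: every conflation `0 → N → Z → M → 0` splits. -/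
def Ext1Zero (M N : 𝒜) : Prop :=
  ∀ (Z : 𝒜) (i : N ⟶ Z) (p : Z ⟶ M) (w : i ≫ p = 0),
    E.conflation (ShortComplex.mk i p w) → ∃ r : Z ⟶ N, i ≫ r = 𝟙 N

/-- The right `ℰ`-orthogonal class `𝒳^⊥`. -/
def rightPerp (𝒳 : Set 𝒜) : Set 𝒜 := {N | ∀ X ∈ 𝒳, E.Ext1Zero X N}

/-- The left `ℰ`-orthogonal class `^⊥𝒴`. -/
def leftPerp (𝒴 : Set 𝒜) : Set 𝒜 := {M | ∀ Y ∈ 𝒴, E.Ext1Zero M Y}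

/-- A class is closed under `ℰ`-extensions. -/
def ClosedUnderExtensions (𝒯 : Set 𝒜) : Prop :=
  ∀ S : ShortComplex 𝒜, E.conflation S → S.X₁ ∈ 𝒯 → S.X₃ ∈ 𝒯 → S.X₂ ∈ 𝒯

/-- An `ℰ`-resolving class. -/
def Resolving (𝒯 : Set 𝒜) : Prop :=
  (∀ P : 𝒜, E.EProjective P → P ∈ 𝒯) ∧ E.ClosedUnderExtensions 𝒯 ∧
    ∀ S : ShortComplex 𝒜, E.conflation S → S.X₂ ∈ 𝒯 → S.X₃ ∈ 𝒯 → S.X₁ ∈ 𝒯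

/-- An `ℰ`-coresolving class. -/
def Coresolving (𝒯 : Set 𝒜) : Prop :=
  (∀ I : 𝒜, E.EInjective I → I ∈ 𝒯) ∧ E.ClosedUnderExtensions 𝒯 ∧
    ∀ S : ShortComplex 𝒜, E.conflation S → S.X₁ ∈ 𝒯 → S.X₂ ∈ 𝒯 → S.X₃ ∈ 𝒯

/-- `(𝒳,𝒴)` is a complete hereditary `ℰ`-cotorsion pair. -/
def CompleteHereditaryCotorsionPair (𝒳 𝒴 : Set 𝒜) : Prop :=
  𝒳 = E.leftPerp 𝒴 ∧ 𝒴 = E.rightPerp 𝒳 ∧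
  (∀ A : 𝒜, ∃ (Y X : 𝒜) (i : Y ⟶ X) (p : X ⟶ A) (w : i ≫ p = 0),
      E.conflation (ShortComplex.mk i p w) ∧ X ∈ 𝒳 ∧ Y ∈ 𝒴) ∧
  (∀ A : 𝒜, ∃ (Y' X' : 𝒜) (i : A ⟶ Y') (p : Y' ⟶ X') (w : i ≫ p = 0),
      E.conflation (ShortComplex.mk i p w) ∧ X' ∈ 𝒳 ∧ Y' ∈ 𝒴) ∧
  E.Resolving 𝒳

end ExactStructure

/-- `f : X ⟶ A` is an `𝒳`-precover of `A`. -/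
def IsPrecover (𝒳 : Set 𝒜) {X A : 𝒜} (f : X ⟶ A) : Prop :=
  X ∈ 𝒳 ∧ ∀ X' : 𝒜, X' ∈ 𝒳 → ∀ g : X' ⟶ A, ∃ h : X' ⟶ X, h ≫ f = g

/-- `f : X ⟶ A` is an `𝒳`-cover of `A`. -/
def IsCover (𝒳 : Set 𝒜) {X A : 𝒜} (f : X ⟶ A) : Prop :=
  IsPrecover 𝒳 f ∧ ∀ h : X ⟶ X, h ≫ f = f → IsIso h

/-- `f : A ⟶ Y` is a `𝒴`-preenvelope of `A`. -/
def IsPreenvelope (𝒴 : Set 𝒜) {A Y : 𝒜} (f : A ⟶ Y) : Prop :=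
  Y ∈ 𝒴 ∧ ∀ Y' : 𝒜, Y' ∈ 𝒴 → ∀ g : A ⟶ Y', ∃ h : Y ⟶ Y', f ≫ h = g

/-- `f : A ⟶ Y` is a `𝒴`-envelope of `A`. -/
def IsEnvelope (𝒴 : Set 𝒜) {A Y : 𝒜} (f : A ⟶ Y) : Prop :=
  IsPreenvelope 𝒴 f ∧ ∀ h : Y ⟶ Y, f ≫ h = f → IsIso h

/-- A class of objects closed under isomorphisms. -/
def ClosedUnderIsos (𝒳 : Set 𝒜) : Prop := ∀ X Y : 𝒜, (X ≅ Y) → X ∈ 𝒳 → Y ∈ 𝒳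

/-- A class of objects closed under direct summands. -/
def ClosedUnderDirectSummands (𝒳 : Set 𝒜) : Prop :=
  ∀ X Y : 𝒜, (∃ (s : Y ⟶ X) (r : X ⟶ Y), s ≫ r = 𝟙 Y) → X ∈ 𝒳 → Y ∈ 𝒳

end ExactPaper

/-!
Take an `ℰ`-projective `P` with an admissible epic `P ⟶ Z` and lift it through `g` to `P ⟶ Y`.
This gives a morphism to `0 → X → Y → Z → 0` from the conflation ending in `P ⟶ Z` which is the
identity on `Z`. Its left-hand square is therefore a pushout, so that `X ⟶ Y` is a pushout of an
admissible monic. That `0 → X → Y → Z → 0` is short exact in the first place can be tested on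
`ℰ`-projectives, because every object is a quotient of one.
-/

namespace ExactPaper

section HomShortExact

variable {C : Type u} [Category.{v} C]

/-- The sequence `0 → Hom(P, X) → Hom(P, Y) → Hom(P, Z) → 0` induced by `f : X ⟶ Y` and
`g : Y ⟶ Z` is exact, for testing whether `0 → X → Y → Z → 0` is short exact. The middle condition,
being an equivalence, also says that `Hom(P, X) → Hom(P, Z)` is zero. -/
def HomShortExact [HasZeroMorphisms C] (P : C) {X Y Z : C} (f : X ⟶ Y) (g : Y ⟶ Z) : Prop :=
  Function.Injective (fun u : P ⟶ X => u ≫ f) ∧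
    (∀ v : P ⟶ Y, v ≫ g = 0 ↔ ∃ u : P ⟶ X, u ≫ f = v) ∧
    Function.Surjective (fun v : P ⟶ Y => v ≫ g)

variable {𝒬 : ObjectProperty C} (hcover : ∀ M : C, ∃ (P : C) (p : P ⟶ M), 𝒬 P ∧ Epi p)
include hcover

lemma mono_of_injective_comp {X Y : C} {f : X ⟶ Y}
    (hf : ∀ P, 𝒬 P → Function.Injective (fun u : P ⟶ X => u ≫ f)) : Mono f where
  right_cancellation {M} a b hab := by
    obtain ⟨P, p, hP, _⟩ := hcover M
    exact (cancel_epi p).1 (hf P hP (by simp [hab]))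

lemma epi_of_surjective_comp {Y Z : C} {g : Y ⟶ Z}
    (hg : ∀ P, 𝒬 P → Function.Surjective (fun v : P ⟶ Y => v ≫ g)) : Epi g := by
  obtain ⟨P, p, hP, _⟩ := hcover Z
  obtain ⟨q, hq⟩ := hg P hP p
  exact epi_of_epi_fac hq

lemma shortComplex_exact_of_forall_exists_lift [Abelian C] (S : ShortComplex C)
    (hS : ∀ P, 𝒬 P → ∀ v : P ⟶ S.X₂, v ≫ S.g = 0 → ∃ u : P ⟶ S.X₁, u ≫ S.f = v) :
    S.Exact := by
  rw [S.exact_iff_exact_up_to_refinements]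
  intro A x hx
  obtain ⟨P, p, hP, hp⟩ := hcover A
  obtain ⟨u, hu⟩ := hS P hP (p ≫ x) (by simp [hx])
  exact ⟨P, p, hp, u, hu.symm⟩

lemma comp_eq_zero_of_homShortExact [HasZeroMorphisms C] {X Y Z : C} {f : X ⟶ Y} {g : Y ⟶ Z}
    (hfg : ∀ P, 𝒬 P → HomShortExact P f g) : f ≫ g = 0 := by
  obtain ⟨P, p, hP, _⟩ := hcover X
  have hpfg : (p ≫ f) ≫ g = 0 := ((hfg P hP).2.1 _).2 ⟨p, rfl⟩
  exact zero_of_epi_comp p (by rw [← assoc, hpfg])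

lemma exists_shortExact_of_homShortExact [Abelian C] {X Y Z : C} {f : X ⟶ Y} {g : Y ⟶ Z}
    (hfg : ∀ P, 𝒬 P → HomShortExact P f g) :
    ∃ w : f ≫ g = 0, (ShortComplex.mk f g w).ShortExact :=
  ⟨comp_eq_zero_of_homShortExact hcover hfg,
    { exact := shortComplex_exact_of_forall_exists_lift hcover _
        fun P hP v => ((hfg P hP).2.1 v).1
      mono_f := mono_of_injective_comp hcover fun P hP => (hfg P hP).1
      epi_g := epi_of_surjective_comp hcover fun P hP => (hfg P hP).2.2 }⟩

end HomShortExact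

variable {𝒜 : Type u} [Category.{v} 𝒜] [Abelian 𝒜]

section Pushout

variable {S₁ S₂ : ShortComplex 𝒜} (φ : S₁ ⟶ S₂)

lemma exists_lift_up_to_refinements_of_mono_τ₃ (h₁ : S₁.Exact) [Mono S₂.f] [Mono φ.τ₃]
    {A : 𝒜} (a : A ⟶ S₁.X₂) (b : A ⟶ S₂.X₁) (hab : a ≫ φ.τ₂ = b ≫ S₂.f) :
    ∃ (A' : 𝒜) (π : A' ⟶ A) (_ : Epi π) (k : A' ⟶ S₁.X₁),
      π ≫ a = k ≫ S₁.f ∧ π ≫ b = k ≫ φ.τ₁ := by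
  have ha : a ≫ S₁.g = 0 := by
    rw [← cancel_mono φ.τ₃, assoc, ← φ.comm₂₃, reassoc_of% hab, S₂.zero, comp_zero, zero_comp]
  obtain ⟨A', π, hπ, k, hk⟩ := h₁.exact_up_to_refinements a ha
  refine ⟨A', π, hπ, k, hk, ?_⟩
  rw [← cancel_mono S₂.f, assoc, assoc, ← hab, reassoc_of% hk, φ.comm₁₂]

lemma exact_biprod_lift_desc_of_mono_τ₃ (h₁ : S₁.Exact) [Mono S₂.f] [Mono φ.τ₃] :
    (ShortComplex.mk (biprod.lift S₁.f (-φ.τ₁)) (biprod.desc φ.τ₂ S₂.f)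
      (by simp [φ.comm₁₂])).Exact := by
  rw [ShortComplex.exact_iff_exact_up_to_refinements]
  intro A (x : A ⟶ S₁.X₂ ⊞ S₂.X₁) (hx : x ≫ biprod.desc φ.τ₂ S₂.f = 0)
  have hcomp : (x ≫ biprod.fst) ≫ φ.τ₂ = (-(x ≫ biprod.snd)) ≫ S₂.f := by
    rw [biprod.desc_eq, Preadditive.comp_add] at hx
    simpa using eq_neg_of_add_eq_zero_left hx
  obtain ⟨A', π, hπ, k, hfst, hsnd⟩ :=
    exists_lift_up_to_refinements_of_mono_τ₃ φ h₁ _ _ hcomp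
  have hx_lift : π ≫ x = k ≫ biprod.lift S₁.f (-φ.τ₁) := by
    ext
    · simpa using hfst
    · simpa [neg_eq_iff_eq_neg] using hsnd
  exact ⟨A', π, hπ, k, hx_lift⟩

lemma epi_biprod_desc_of_epi_τ₃ (h₂ : S₂.Exact) [Epi S₁.g] [Epi φ.τ₃] :
    Epi (biprod.desc φ.τ₂ S₂.f) := by
  rw [epi_iff_surjective_up_to_refinements]
  intro A y
  obtain ⟨A', π, _, x, hx⟩ := surjective_up_to_refinements_of_epi (S₁.g ≫ φ.τ₃) (y ≫ S₂.g)
  obtain ⟨A'', π', _, z, hz⟩ :=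
    h₂.exact_up_to_refinements (π ≫ y - x ≫ φ.τ₂) (by simp [hx, φ.comm₂₃])
  refine ⟨A'', π' ≫ π, inferInstance, biprod.lift (π' ≫ x) z, ?_⟩
  simp [← hz]

lemma isPushout_of_isIso_τ₃ (h₁ : S₁.Exact) (h₂ : S₂.Exact) [Epi S₁.g] [Mono S₂.f]
    [IsIso φ.τ₃] : IsPushout S₁.f φ.τ₁ φ.τ₂ S₂.f := by
  let sq : CommSq S₁.f φ.τ₁ φ.τ₂ S₂.f := ⟨φ.comm₁₂.symm⟩
  have : Epi sq.shortComplex.g := epi_biprod_desc_of_epi_τ₃ φ h₂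
  have hsq : sq.shortComplex.Exact := exact_biprod_lift_desc_of_mono_τ₃ φ h₁
  exact ⟨sq, ⟨sq.isColimitEquivIsColimitCokernelCofork.symm hsq.gIsCokernel⟩⟩

end Pushout

namespace ExactStructure

variable (E : ExactStructure 𝒜)

lemma epi_of_admEpi {Y Z : 𝒜} {g : Y ⟶ Z} (hg : AdmEpi E.conflation g) : Epi g := by
  obtain ⟨X, f, w, hfg⟩ := hg
  exact (E.shortExact_of_conflation _ hfg).epi_g

lemma conflation_of_admMono {S : ShortComplex 𝒜} (hS : S.ShortExact)
    (hf : AdmMono E.conflation S.f) : E.conflation S := by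
  obtain ⟨Z, g, w, hfg⟩ := hf
  have hcoker := (E.shortExact_of_conflation _ hfg).gIsCokernel
  let e : Z ≅ S.X₃ := hcoker.coconePointUniqueUpToIso hS.gIsCokernel
  have he : g ≫ e.hom = S.g :=
    hcoker.comp_coconePointUniqueUpToIso_hom hS.gIsCokernel WalkingParallelPair.one
  let ψ : ShortComplex.mk S.f g w ≅ S :=
    ShortComplex.isoMk (Iso.refl _) (Iso.refl _) e (by simp) (by simp [he])
  exact E.conflation_of_iso _ _ ψ hfg

lemma admMono_of_isPushout {L M M' N : 𝒜} {i : L ⟶ M} {f : L ⟶ M'} {j : M ⟶ N} {k : M' ⟶ N}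
    (sq : IsPushout i f j k) (hi : AdmMono E.conflation i) : AdmMono E.conflation k := by
  obtain ⟨Z, g, w, hconf⟩ := E.admMono_pushout i f hi
  let ψ : ShortComplex.mk (pushout.inr i f) g w ≅
      ShortComplex.mk k (sq.isoPushout.hom ≫ g) (by simp [w]) :=
    ShortComplex.isoMk (Iso.refl _) sq.isoPushout.symm (Iso.refl _)
  exact ⟨Z, _, _, E.conflation_of_iso _ _ ψ hconf⟩

lemma conflation_of_hom_of_isIso_τ₃ {S₁ S₂ : ShortComplex 𝒜} (φ : S₁ ⟶ S₂) [IsIso φ.τ₃]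
    (h₁ : E.conflation S₁) (h₂ : S₂.ShortExact) : E.conflation S₂ := by
  have hS₁ := E.shortExact_of_conflation _ h₁
  have := hS₁.epi_g
  have := h₂.mono_f
  exact E.conflation_of_admMono h₂ (E.admMono_of_isPushout
    (isPushout_of_isIso_τ₃ φ hS₁.exact h₂.exact) ⟨S₁.X₃, S₁.g, S₁.zero, h₁⟩)

/-- The obscure axiom of Quillen. -/
lemma conflation_of_admEpi_comp {S : ShortComplex 𝒜} (hS : S.ShortExact) {P : 𝒜} (h : P ⟶ S.X₂)
    (hh : AdmEpi E.conflation (h ≫ S.g)) : E.conflation S := by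
  obtain ⟨K, i, w, hconf⟩ := hh
  have := hS.mono_f
  let φ : ShortComplex.mk i (h ≫ S.g) w ⟶ S :=
    { τ₁ := hS.exact.lift (i ≫ h) (by rw [assoc, w])
      τ₂ := h
      τ₃ := 𝟙 _ }
  have : IsIso φ.τ₃ := inferInstanceAs (IsIso (𝟙 _))
  exact E.conflation_of_hom_of_isIso_τ₃ φ hconf hS

variable {E}

lemma EProjective.homShortExact {P : 𝒜} (hP : E.EProjective P) {S : ShortComplex 𝒜}
    (hS : E.conflation S) : HomShortExact P S.f S.g := by
  have hexact := E.shortExact_of_conflation S hS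
  have := hexact.mono_f
  refine ⟨fun _ _ h => (cancel_mono S.f).1 h, fun v => ⟨fun hv => ?_, ?_⟩, hP S hS⟩
  · exact ⟨hexact.exact.lift v hv, hexact.exact.lift_f v hv⟩
  · rintro ⟨u, rfl⟩
    simp

lemma EnoughProjectives.exists_admEpi (hproj : E.EnoughProjectives) (M : 𝒜) :
    ∃ (P : 𝒜) (p : P ⟶ M), E.EProjective P ∧ AdmEpi E.conflation p := by
  obtain ⟨K, P, i, p, w, hconf, hP⟩ := hproj M
  exact ⟨P, p, hP, K, i, w, hconf⟩

end ExactStructure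

end ExactPaper

open ExactPaper in
theorem conflation_iff_hom_from_eprojective_exact_general
    {𝒜 : Type u} [Category.{v} 𝒜] [Abelian 𝒜] (E : ExactStructure 𝒜)
    (hproj : E.EnoughProjectives) {X Y Z : 𝒜} (f : X ⟶ Y) (g : Y ⟶ Z) :
    (∃ w : f ≫ g = 0, E.conflation (ShortComplex.mk f g w)) ↔
      ∀ P : 𝒜, E.EProjective P → HomShortExact P f g := by
  refine ⟨fun ⟨_, hconf⟩ P hP => hP.homShortExact hconf, fun hfg => ?_⟩
  have hcover (M : 𝒜) : ∃ (P : 𝒜) (p : P ⟶ M), E.EProjective P ∧ Epi p := by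
    obtain ⟨P, p, hP, hp⟩ := hproj.exists_admEpi M
    exact ⟨P, p, hP, E.epi_of_admEpi hp⟩
  obtain ⟨w, hexact⟩ := exists_shortExact_of_homShortExact (𝒬 := E.EProjective) hcover hfg
  obtain ⟨P, p, hP, hp⟩ := hproj.exists_admEpi Z
  obtain ⟨h, rfl⟩ := (hfg P hP).2.2 p
  exact ⟨w, E.conflation_of_admEpi_comp hexact h hp⟩

open ExactPaper in
/-- **Lemma 2.3 (1)⇔(2)**: a short sequence `0 → X → Y → Z → 0` is a conflation iff
for every `ℰ`-projective object `P` the induced sequence of abelian groups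
`0 → Hom(P,X) → Hom(P,Y) → Hom(P,Z) → 0` is exact. -/
theorem conflation_iff_hom_from_eprojective_exact
    {𝒜 : Type u} [CategoryTheory.Category.{v} 𝒜] [CategoryTheory.Abelian 𝒜]
    (E : ExactPaper.ExactStructure 𝒜)
    (hproj : E.EnoughProjectives) (hinj : E.EnoughInjectives)
    {X Y Z : 𝒜} (f : X ⟶ Y) (g : Y ⟶ Z) :
    (∃ w : f ≫ g = 0, E.conflation (CategoryTheory.ShortComplex.mk f g w)) ↔
      ∀ P : 𝒜, E.EProjective P →
        Function.Injective (fun u : P ⟶ X => u ≫ f) ∧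
        (∀ v : P ⟶ Y, v ≫ g = 0 ↔ ∃ u : P ⟶ X, u ≫ f = v) ∧
        Function.Surjective (fun v : P ⟶ Y => v ≫ g) :=
  conflation_iff_hom_from_eprojective_exact_general E hproj f g
end

section
/- Let ℰ be an exact structure on an abelian category 𝒜 such that 𝒜 has enough ℰ-projectives and enough ℰ-injectives, and let X → Y → Z be composable morphisms in 𝒜. Then the sequence 0 → X → Y → Z → 0 is a conflation (i.e., belongs to ℰ) if and only if for every ℰ-injective object I the induced sequence of abelian groups 0 → Hom(Z,I) → Hom(Y,I) → Hom(X,I) → 0 is exact. -/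
open CategoryTheory Category Limits

universe v u

/-! Suppose `0 → X → Y → Z → 0` becomes exact under `Hom(-, I)` for every `ℰ`-injective `I`. Every
object embeds into an `ℰ`-injective one, so the sequence is short exact in `𝒜`. Choose a conflation
`0 → X → I → C → 0` with `I` an `ℰ`-injective object. Extending `X → I` along `X → Y` gives a
morphism of short exact sequences which is the identity on `X`, so its right-hand square is a
pullback, and `Y → Z` is the pullback of the admissible epic `I → C` along `Z → C`. -/

namespace ExactPaper

section HomExactInto

variable {C : Type u} [Category.{v} C]

/-- Exactness of the sequence `0 → Hom(Z, I) → Hom(Y, I) → Hom(X, I) → 0` induced by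
`X ⟶ Y ⟶ Z`, spelled out elementwise. The composite `X ⟶ Z` is not required to vanish, since that
is deduced from this condition when `I` ranges over enough objects. -/
def HomExactInto [HasZeroMorphisms C] {X Y Z : C} (f : X ⟶ Y) (g : Y ⟶ Z) (I : C) : Prop :=
  Function.Injective (fun w : Z ⟶ I => g ≫ w) ∧
  (∀ v : Y ⟶ I, f ≫ v = 0 ↔ ∃ w : Z ⟶ I, g ≫ w = v) ∧
  Function.Surjective (fun v : Y ⟶ I => f ≫ v)

theorem homExactInto_of_shortExact [Preadditive C] [Balanced C] {S : ShortComplex C}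
    (hS : S.ShortExact) {I : C} (hf : Function.Surjective (fun v : S.X₂ ⟶ I => S.f ≫ v)) :
    HomExactInto S.f S.g I := by
  have := hS.epi_g
  refine ⟨fun a b hab => (cancel_epi S.g).1 hab, fun v => ⟨fun hv => ?_, ?_⟩, hf⟩
  · exact ⟨hS.exact.desc v hv, hS.exact.g_desc v hv⟩
  · rintro ⟨w, rfl⟩
    rw [S.zero_assoc, zero_comp]

variable {Q : ObjectProperty C} {X Y Z : C} {f : X ⟶ Y} {g : Y ⟶ Z}

theorem comp_eq_zero_of_homExactInto [HasZeroMorphisms C] (hQ : Q.IsCoseparating)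
    (hfg : ∀ I, Q I → HomExactInto f g I) : f ≫ g = 0 :=
  hQ _ _ fun I hI h => by
    rw [assoc, zero_comp]
    exact ((hfg I hI).2.1 (g ≫ h)).2 ⟨h, rfl⟩

theorem epi_of_homExactInto [HasZeroMorphisms C] (hQ : Q.IsCoseparating)
    (hfg : ∀ I, Q I → HomExactInto f g I) : Epi g :=
  (hQ.epi_iff g).2 fun I hI _ _ h => (hfg I hI).1 h

theorem mono_of_homExactInto [HasZeroMorphisms C] (hQ : Q.IsCoseparating)
    (hfg : ∀ I, Q I → HomExactInto f g I) : Mono f where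
  right_cancellation a b hab := hQ _ _ fun I hI h => by
    obtain ⟨k, rfl⟩ := (hfg I hI).2.2 h
    simp only [reassoc_of% hab]

theorem shortExact_of_homExactInto [Abelian C] (hQ : Q.IsCoseparating)
    (hfg : ∀ I, Q I → HomExactInto f g I) :
    (ShortComplex.mk f g (comp_eq_zero_of_homExactInto hQ hfg)).ShortExact := by
  refine .mk' ?_ (mono_of_homExactInto hQ hfg) (epi_of_homExactInto hQ hfg)
  rw [ShortComplex.exact_iff_kernel_ι_comp_cokernel_π_zero]
  refine hQ _ _ fun I hI h => ?_
  obtain ⟨t, ht⟩ : ∃ t, g ≫ t = cokernel.π f ≫ h :=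
    ((hfg I hI).2.1 (cokernel.π f ≫ h)).1 (by rw [cokernel.condition_assoc, zero_comp])
  rw [assoc, ← ht, kernel.condition_assoc, zero_comp, zero_comp]

end HomExactInto

theorem isPullback_of_isIso_τ₁ {C : Type u} [Category.{v} C] [Abelian C] {S T : ShortComplex C}
    (hS : S.Exact) (hT : T.Exact) [Epi S.g] [Mono T.f] (φ : S ⟶ T) [IsIso φ.τ₁] :
    IsPullback φ.τ₂ S.g T.g φ.τ₃ := by
  let j : S.X₂ ⟶ pullback T.g φ.τ₃ := pullback.lift φ.τ₂ S.g φ.comm₂₃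
  have hj_fst : j ≫ pullback.fst _ _ = φ.τ₂ := pullback.lift_fst ..
  have hj_snd : j ≫ pullback.snd _ _ = S.g := pullback.lift_snd ..
  have : Mono j := Preadditive.mono_of_cancel_zero _ fun {A} a ha => by
    have haφ : a ≫ φ.τ₂ = 0 := by rw [← hj_fst, reassoc_of% ha, zero_comp]
    have hag : a ≫ S.g = 0 := by rw [← hj_snd, reassoc_of% ha, zero_comp]
    obtain ⟨A', π, _, x, hx⟩ := hS.exact_up_to_refinements a hag
    have hx_zero : x = 0 := by
      rw [← cancel_mono (φ.τ₁ ≫ T.f), φ.comm₁₂, ← reassoc_of% hx, haφ, comp_zero, zero_comp]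
    rw [← cancel_epi π, hx, hx_zero, zero_comp, comp_zero]
  have : Epi j := (epi_iff_surjective_up_to_refinements j).2 fun A y => by
    obtain ⟨A', π, hπ, x, hx⟩ :=
      surjective_up_to_refinements_of_epi S.g (y ≫ pullback.snd _ _)
    -- `x` only lifts the second component of `y`; its error `d` in the first one comes from `T.X₁`.
    let d : A' ⟶ T.X₂ := π ≫ y ≫ pullback.fst _ _ - x ≫ φ.τ₂
    have hd : d ≫ T.g = 0 := by
      simp only [d, Preadditive.sub_comp, assoc, pullback.condition, φ.comm₂₃, reassoc_of% hx,
        sub_self]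
    refine ⟨A', π, hπ, x + hT.lift d hd ≫ inv φ.τ₁ ≫ S.f, pullback.hom_ext ?_ ?_⟩
    · simp [hj_fst, ← φ.comm₁₂, d]
    · simp [hj_snd, hx]
  have : IsIso j := isIso_of_mono_of_epi j
  exact .of_iso_pullback ⟨φ.comm₂₃⟩ (asIso j) hj_fst hj_snd

namespace ExactStructure

variable {𝒜 : Type u} [Category.{v} 𝒜] [Abelian 𝒜] {E : ExactStructure 𝒜}

theorem EnoughInjectives.isCoseparating (hinj : E.EnoughInjectives) :
    ObjectProperty.IsCoseparating E.EInjective := by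
  intro X Y a b hab
  obtain ⟨I, _, i, _, _, hi, hI⟩ := hinj Y
  have : Mono i := (E.shortExact_of_conflation _ hi).mono_f
  exact (cancel_mono i).1 (hab I hI i)

theorem admEpi_of_isPullback {M N M' P : 𝒜} {p : M ⟶ N} {g : M' ⟶ N} {fst : P ⟶ M} {snd : P ⟶ M'}
    (sq : IsPullback fst snd p g) (hp : AdmEpi E.conflation p) : AdmEpi E.conflation snd := by
  obtain ⟨K, i, w, hi⟩ := E.admEpi_pullback p g hp
  refine ⟨K, i ≫ sq.isoPullback.inv, by simp [w], E.conflation_of_iso _ _ ?_ hi⟩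
  exact ShortComplex.isoMk (Iso.refl _) sq.isoPullback.symm (Iso.refl _)

theorem conflation_of_admEpi {S : ShortComplex 𝒜} (hS : S.ShortExact)
    (hg : AdmEpi E.conflation S.g) : E.conflation S := by
  obtain ⟨K, i, w, hi⟩ := hg
  let hK := (E.shortExact_of_conflation _ hi).fIsKernel
  let e : K ≅ S.X₁ := hK.conePointUniqueUpToIso hS.fIsKernel
  have he : e.hom ≫ S.f = i :=
    hK.conePointUniqueUpToIso_hom_comp hS.fIsKernel WalkingParallelPair.zero
  refine E.conflation_of_iso _ S ?_ hi
  exact ShortComplex.isoMk e (Iso.refl _) (Iso.refl _) (by simp [he]) (by simp)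

theorem conflation_of_admMono_comp {S : ShortComplex 𝒜} (hS : S.ShortExact) {I : 𝒜}
    (k : S.X₂ ⟶ I) (hk : AdmMono E.conflation (S.f ≫ k)) : E.conflation S := by
  obtain ⟨C, p, w, hT⟩ := hk
  let T := ShortComplex.mk (S.f ≫ k) p w
  have hTexact : T.ShortExact := E.shortExact_of_conflation T hT
  have := hS.epi_g
  have := hTexact.mono_f
  let φ : S ⟶ T :=
    { τ₁ := 𝟙 _
      τ₂ := k
      τ₃ := hS.exact.desc (k ≫ p) (by rw [← assoc, w])
      comm₂₃ := (hS.exact.g_desc _ _).symm }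
  have : IsIso φ.τ₁ := inferInstanceAs (IsIso (𝟙 S.X₁))
  have sq : IsPullback k S.g p φ.τ₃ := isPullback_of_isIso_τ₁ hS.exact hTexact.exact φ
  exact conflation_of_admEpi hS (admEpi_of_isPullback sq ⟨_, _, w, hT⟩)

theorem homExactInto_of_conflation {S : ShortComplex 𝒜} (hS : E.conflation S) {I : 𝒜}
    (hI : E.EInjective I) : HomExactInto S.f S.g I :=
  homExactInto_of_shortExact (E.shortExact_of_conflation S hS) (hI S hS)

theorem conflation_of_homExactInto (hinj : E.EnoughInjectives) {X Y Z : 𝒜} {f : X ⟶ Y}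
    {g : Y ⟶ Z} (hfg : ∀ I, E.EInjective I → HomExactInto f g I) :
    ∃ w : f ≫ g = 0, E.conflation (ShortComplex.mk f g w) := by
  obtain ⟨I, C, i, p, w, hi, hI⟩ := hinj X
  obtain ⟨k, rfl⟩ : ∃ k, f ≫ k = i := (hfg I hI).2.2 i
  exact ⟨_, conflation_of_admMono_comp (shortExact_of_homExactInto hinj.isCoseparating hfg) k
    ⟨C, p, w, hi⟩⟩

end ExactStructure

end ExactPaper

theorem conflation_iff_hom_to_einjective_exact_general
    {𝒜 : Type u} [Category.{v} 𝒜] [Abelian 𝒜] (E : ExactPaper.ExactStructure 𝒜)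
    (hinj : E.EnoughInjectives) {X Y Z : 𝒜} (f : X ⟶ Y) (g : Y ⟶ Z) :
    (∃ w : f ≫ g = 0, E.conflation (ShortComplex.mk f g w)) ↔
      ∀ I : 𝒜, E.EInjective I → ExactPaper.HomExactInto f g I :=
  ⟨fun ⟨_, hfg⟩ _ hI => ExactPaper.ExactStructure.homExactInto_of_conflation hfg hI,
    ExactPaper.ExactStructure.conflation_of_homExactInto hinj⟩

/-- **Lemma 2.3 (1)⇔(3)**: a short sequence `0 → X → Y → Z → 0` is a conflation iff
for every `ℰ`-injective object `I` the induced sequence of abelian groups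
`0 → Hom(Z,I) → Hom(Y,I) → Hom(X,I) → 0` is exact. -/
theorem conflation_iff_hom_to_einjective_exact
    {𝒜 : Type u} [CategoryTheory.Category.{v} 𝒜] [CategoryTheory.Abelian 𝒜]
    (E : ExactPaper.ExactStructure 𝒜)
    (hproj : E.EnoughProjectives) (hinj : E.EnoughInjectives)
    {X Y Z : 𝒜} (f : X ⟶ Y) (g : Y ⟶ Z) :
    (∃ w : f ≫ g = 0, E.conflation (CategoryTheory.ShortComplex.mk f g w)) ↔
      ∀ I : 𝒜, E.EInjective I →
        Function.Injective (fun w : Z ⟶ I => g ≫ w) ∧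
        (∀ v : Y ⟶ I, f ≫ v = 0 ↔ ∃ w : Z ⟶ I, g ≫ w = v) ∧
        Function.Surjective (fun v : Y ⟶ I => f ≫ v) :=
  conflation_iff_hom_to_einjective_exact_general E hinj f g
end

section
/- (Wakamatsu lemma, exact version, cover form) Let ℰ be an exact structure on an abelian category 𝒜 such that 𝒜 has enough ℰ-projectives and enough ℰ-injectives, and let 𝒳 be a class of objects of 𝒜 closed under ℰ-extensions (for every conflation 0 → A → B → C → 0 with A, C ∈ 𝒳 also B ∈ 𝒳). If f : X → A is an epimorphism with X ∈ 𝒳 that is an 𝒳-cover of A, then Ker f ∈ 𝒳^⊥, i.e., for every X' ∈ 𝒳 every conflation 0 → Ker f → M → X' → 0 splits. -/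
open CategoryTheory Category Limits

universe v u

/-!
Given a conflation `0 → Ker f → M → X' → 0` with `X' ∈ 𝒳`, push it out along `Ker f → X` to a
conflation `0 → X → P → X' → 0`, so that `P ∈ 𝒳`. The maps `0 : M → A` and `f : X → A` glue to
`P → A`, which factors through the cover `f`; by minimality of `f` the factorization can be
chosen to be a retraction of `X → P`. Its restriction to `M` is killed by `f`, hence corestricts to
a retraction `M → Ker f`.
-/

namespace ExactPaper

section

variable {C : Type u} [Category.{v} C]

theorem IsCover.exists_retraction {𝒳 : Set C} {X A P : C} {f : X ⟶ A} (hf : IsCover 𝒳 f)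
    (hP : P ∈ 𝒳) {j : X ⟶ P} {t : P ⟶ A} (hjt : j ≫ t = f) :
    ∃ r : P ⟶ X, j ≫ r = 𝟙 X ∧ r ≫ f = t := by
  obtain ⟨⟨_, lift⟩, minimal⟩ := hf
  obtain ⟨h, hh⟩ := lift P hP t
  have hjh : (j ≫ h) ≫ f = f := by rw [assoc, hh, hjt]
  have : IsIso (j ≫ h) := minimal _ hjh
  have inv_comp : inv (j ≫ h) ≫ f = f := by rw [IsIso.inv_comp_eq, hjh]
  exact ⟨h ≫ inv (j ≫ h), by rw [← assoc, IsIso.hom_inv_id], by rw [assoc, inv_comp, hh]⟩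

/-- If `q` extends a cokernel `p` of `t` along a pushout of `t` and vanishes on the opposite side
`b`, then `q` is a cokernel of `b`. -/
def isColimitCokernelCoforkOfIsPushout [HasZeroMorphisms C] {X₁ X₂ X₃ X₄ Z : C} {t : X₁ ⟶ X₂}
    {l : X₁ ⟶ X₃} {r : X₂ ⟶ X₄} {b : X₃ ⟶ X₄} (sq : IsPushout t l r b) {p : X₂ ⟶ Z}
    {w : t ≫ p = 0} (hp : IsColimit (CokernelCofork.ofπ p w)) {q : X₄ ⟶ Z} (hrq : r ≫ q = p)
    (hbq : b ≫ q = 0) : IsColimit (CokernelCofork.ofπ q hbq) :=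
  have : Epi p := Cofork.IsColimit.epi hp
  have : Epi q := epi_of_epi_fac hrq
  CokernelCofork.IsColimit.ofπ' q hbq fun k hbk ↦
    have htrk : t ≫ r ≫ k = 0 := by rw [sq.w_assoc, hbk, comp_zero]
    let ⟨d, (hd : p ≫ d = r ≫ k)⟩ := CokernelCofork.IsColimit.desc' hp (r ≫ k) htrk
    ⟨d, sq.hom_ext (by rw [← hd, ← hrq, assoc]) (by rw [hbk, ← assoc, hbq, zero_comp])⟩

end

variable {𝒜 : Type u} [Category.{v} 𝒜] [Abelian 𝒜]

namespace ExactStructure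

variable (E : ExactStructure 𝒜)

theorem conflation_of_admMono_of_isColimit {S : ShortComplex 𝒜}
    (hf : AdmMono E.conflation S.f) (hg : IsColimit (CokernelCofork.ofπ S.g S.zero)) :
    E.conflation S := by
  obtain ⟨Z, g, w, hc⟩ := hf
  let hg' := (E.shortExact_of_conflation _ hc).gIsCokernel
  let e : Z ≅ S.X₃ := hg'.coconePointUniqueUpToIso hg
  have he : g ≫ e.hom = S.g := hg'.comp_coconePointUniqueUpToIso_hom hg WalkingParallelPair.one
  exact E.conflation_of_iso (ShortComplex.mk S.f g w) S
    (ShortComplex.isoMk (Iso.refl _) (Iso.refl _) e (by simp) (by simp [he])) hc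

theorem conflation_pushout {S : ShortComplex 𝒜} (hS : E.conflation S) {Y : 𝒜} (φ : S.X₁ ⟶ Y) :
    E.conflation (ShortComplex.mk (pushout.inr S.f φ)
      (pushout.desc S.g 0 (by rw [S.zero, comp_zero])) (pushout.inr_desc _ _ _)) :=
  E.conflation_of_admMono_of_isColimit (E.admMono_pushout _ _ ⟨_, _, _, hS⟩)
    (isColimitCokernelCoforkOfIsPushout (IsPushout.of_hasPushout S.f φ)
      (E.shortExact_of_conflation S hS).gIsCokernel (pushout.inl_desc _ _ _) _)

variable {E}

theorem ClosedUnderExtensions.pushout_mem {𝒳 : Set 𝒜} (hext : E.ClosedUnderExtensions 𝒳)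
    {S : ShortComplex 𝒜} (hS : E.conflation S) (hS₃ : S.X₃ ∈ 𝒳) {Y : 𝒜} (hY : Y ∈ 𝒳)
    (φ : S.X₁ ⟶ Y) : pushout S.f φ ∈ 𝒳 :=
  hext _ (E.conflation_pushout hS φ) hY hS₃

end ExactStructure

end ExactPaper

open ExactPaper in
theorem wakamatsu_cover_general {𝒜 : Type u} [Category.{v} 𝒜] [Abelian 𝒜]
    (E : ExactStructure 𝒜) {𝒳 : Set 𝒜} (hext : E.ClosedUnderExtensions 𝒳)
    {X A : 𝒜} {f : X ⟶ A} (hcover : IsCover 𝒳 f) : kernel f ∈ E.rightPerp 𝒳 := by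
  intro X' hX' M i p w hc
  have hP : pushout i (kernel.ι f) ∈ 𝒳 := hext.pushout_mem hc hX' hcover.1.1 (kernel.ι f)
  let t : pushout i (kernel.ι f) ⟶ A :=
    pushout.desc 0 f (by rw [comp_zero, kernel.condition])
  obtain ⟨r, inr_r, r_f⟩ := hcover.exists_retraction hP (t := t) (pushout.inr_desc _ _ _)
  have inl_r_f : (pushout.inl i (kernel.ι f) ≫ r) ≫ f = 0 := by
    rw [assoc, r_f, pushout.inl_desc]
  refine ⟨kernel.lift f _ inl_r_f, ?_⟩
  rw [← cancel_mono (kernel.ι f)]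
  calc (i ≫ kernel.lift f _ inl_r_f) ≫ kernel.ι f
      = i ≫ pushout.inl i (kernel.ι f) ≫ r := by rw [assoc, kernel.lift_ι]
    _ = kernel.ι f ≫ pushout.inr i (kernel.ι f) ≫ r := pushout.condition_assoc r
    _ = 𝟙 (kernel f) ≫ kernel.ι f := by rw [inr_r, comp_id, id_comp]

open ExactPaper in
/-- **Wakamatsu lemma, exact version, cover form (Theorem 3.3(1))**: if `𝒳` is closed
under `ℰ`-extensions and `f : X ⟶ A` is an epimorphic `𝒳`-cover, then
`Ker f ∈ 𝒳^⊥`, i.e. every conflation `0 → Ker f → M → X' → 0` with `X' ∈ 𝒳` splits. -/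
theorem wakamatsu_cover
    {𝒜 : Type u} [CategoryTheory.Category.{v} 𝒜] [CategoryTheory.Abelian 𝒜]
    (E : ExactStructure 𝒜)
    (hproj : E.EnoughProjectives) (hinj : E.EnoughInjectives)
    (𝒳 : Set 𝒜) (hext : E.ClosedUnderExtensions 𝒳)
    {X A : 𝒜} (f : X ⟶ A) (hepi : CategoryTheory.Epi f) (hcover : IsCover 𝒳 f) :
    CategoryTheory.Limits.kernel f ∈ E.rightPerp 𝒳 :=
  wakamatsu_cover_general E hext hcover
end

section
/- (Wakamatsu lemma, exact version, envelope form) Let ℰ be an exact structure on an abelian category 𝒜 such that 𝒜 has enough ℰ-projectives and enough ℰ-injectives, and let 𝒳 be a class of objects of 𝒜 closed under ℰ-extensions (for every conflation 0 → A → B → C → 0 with A, C ∈ 𝒳 also B ∈ 𝒳). If f : A → X is a monomorphism with X ∈ 𝒳 that is an 𝒳-envelope of A, then Coker f ∈ ^⊥𝒳, i.e., for every X' ∈ 𝒳 every conflation 0 → X' → M → Coker f → 0 splits. -/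
open CategoryTheory Category Limits

universe v u

/-!
Pull a conflation `X' ⟶ M ⟶ Coker f` back along `π : X ⟶ Coker f`. The pullback `Y` is an
extension of `X` by `X'`, so it lies in `𝒳`. As `f ≫ π = 0`, the pair `(0, f)` defines a map
`A ⟶ Y` lifting `f`, and the envelope property turns it into a section `s` of `Y ⟶ X` extending
`(0, f)`. The composite of `s` with `Y ⟶ M` lifts `π` and kills `f`, hence descends to a section
of `M ⟶ Coker f`.
-/

namespace ExactPaper

theorem IsEnvelope.exists_section_of_lift {C : Type u} [Category.{v} C]
    {𝒳 : Set C} {A X Y : C} {f : A ⟶ X} (hf : IsEnvelope 𝒳 f) (hY : Y ∈ 𝒳)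
    {q : Y ⟶ X} {g : A ⟶ Y} (hg : g ≫ q = f) :
    ∃ s : X ⟶ Y, s ≫ q = 𝟙 X ∧ f ≫ s = g := by
  obtain ⟨h, hh⟩ := hf.1.2 Y hY g
  have f_fixed : f ≫ h ≫ q = f := by rw [reassoc_of% hh, hg]
  have : IsIso (h ≫ q) := hf.2 _ f_fixed
  have f_fixed_inv : f ≫ inv (h ≫ q) = f := by rw [IsIso.comp_inv_eq, f_fixed]
  exact ⟨inv (h ≫ q) ≫ h, by rw [assoc, IsIso.inv_hom_id], by rw [reassoc_of% f_fixed_inv, hh]⟩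

/-- The kernel of a morphism is also the kernel of its base change: if `i` is a kernel of `p`, then
`(i, 0)` is a kernel of the pullback of `p` along `q`. -/
noncomputable def isLimitKernelForkPullbackSnd {C : Type u} [Category.{v} C] [HasZeroMorphisms C]
    {K M N W : C} {i : K ⟶ M} {p : M ⟶ N} {w : i ≫ p = 0} (hi : IsLimit (KernelFork.ofι i w))
    (q : W ⟶ N) [HasPullback p q] :
    IsLimit (KernelFork.ofι (pullback.lift i 0 (by rw [w, zero_comp]) : K ⟶ pullback p q)
      (pullback.lift_snd _ _ _)) :=
  have : Mono i := mono_of_isLimit_fork hi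
  have : Mono (pullback.lift i 0 (by rw [w, zero_comp]) : K ⟶ pullback p q) :=
    mono_of_mono_fac (pullback.lift_fst _ _ _)
  KernelFork.IsLimit.ofι' _ _ fun k hk =>
    have hkp : (k ≫ pullback.fst p q) ≫ p = 0 := by
      rw [assoc, pullback.condition, reassoc_of% hk, zero_comp]
    let l := KernelFork.IsLimit.lift' hi (k ≫ pullback.fst p q) hkp
    ⟨l.1, pullback.hom_ext (by rw [assoc, pullback.lift_fst]; exact l.2)
      (by simp only [assoc, pullback.lift_snd, comp_zero, hk])⟩

variable {𝒜 : Type u} [Category.{v} 𝒜] [Abelian 𝒜]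

namespace ExactStructure

variable (E : ExactStructure 𝒜)

theorem conflation_of_admEpi_of_isLimit {K M N : 𝒜} {i : K ⟶ M} {p : M ⟶ N} {w : i ≫ p = 0}
    (hp : AdmEpi E.conflation p) (hi : IsLimit (KernelFork.ofι i w)) :
    E.conflation (ShortComplex.mk i p w) := by
  obtain ⟨K', k, wk, hk⟩ := hp
  have k_isKernel := (E.shortExact_of_conflation _ hk).fIsKernel
  refine E.conflation_of_iso _ _ ?_ hk
  refine ShortComplex.isoMk (k_isKernel.conePointUniqueUpToIso hi) (Iso.refl _) (Iso.refl _) ?_ ?_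
  · simpa using k_isKernel.conePointUniqueUpToIso_hom_comp hi WalkingParallelPair.zero
  · simp

theorem conflation_pullback {K M N W : 𝒜} {i : K ⟶ M} {p : M ⟶ N} {w : i ≫ p = 0}
    (h : E.conflation (ShortComplex.mk i p w)) (q : W ⟶ N) :
    E.conflation (ShortComplex.mk (pullback.lift i 0 (by rw [w, zero_comp]) : K ⟶ pullback p q)
      (pullback.snd p q) (pullback.lift_snd _ _ _)) :=
  E.conflation_of_admEpi_of_isLimit (E.admEpi_pullback p q ⟨K, i, w, h⟩)
    (isLimitKernelForkPullbackSnd (E.shortExact_of_conflation _ h).fIsKernel q)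

variable {E} in
theorem ClosedUnderExtensions.pullback_mem {𝒳 : Set 𝒜} (hext : E.ClosedUnderExtensions 𝒳)
    {K M N W : 𝒜} {i : K ⟶ M} {p : M ⟶ N} {w : i ≫ p = 0}
    (h : E.conflation (ShortComplex.mk i p w)) (q : W ⟶ N) (hK : K ∈ 𝒳) (hW : W ∈ 𝒳) :
    pullback p q ∈ 𝒳 :=
  hext _ (E.conflation_pullback h q) hK hW

end ExactStructure

end ExactPaper

open ExactPaper in
theorem wakamatsu_envelope_general
    {𝒜 : Type u} [Category.{v} 𝒜] [Abelian 𝒜] (E : ExactStructure 𝒜)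
    (𝒳 : Set 𝒜) (hext : E.ClosedUnderExtensions 𝒳)
    {A X : 𝒜} (f : A ⟶ X) (henv : IsEnvelope 𝒳 f) :
    cokernel f ∈ E.leftPerp 𝒳 := by
  intro X' hX' M i p w hconf
  have pullback_mem : pullback p (cokernel.π f) ∈ 𝒳 := hext.pullback_mem hconf _ hX' henv.1.1
  have lift_snd : pullback.lift 0 f (by simp) ≫ pullback.snd p (cokernel.π f) = f :=
    pullback.lift_snd _ _ _
  obtain ⟨s, s_snd, f_s⟩ := henv.exists_section_of_lift pullback_mem lift_snd
  have f_s_fst : f ≫ s ≫ pullback.fst p (cokernel.π f) = 0 := by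
    rw [reassoc_of% f_s, pullback.lift_fst]
  have desc_p : cokernel.desc f _ f_s_fst ≫ p = 𝟙 (cokernel f) := by
    rw [← cancel_epi (cokernel.π f), cokernel.π_desc_assoc, assoc, pullback.condition,
      reassoc_of% s_snd, comp_id]
  have hS := E.shortExact_of_conflation _ hconf
  have splitting := ShortComplex.Splitting.ofExactOfSection _ hS.exact _ desc_p hS.mono_f
  exact ⟨splitting.r, splitting.f_r⟩

open ExactPaper in
/-- **Wakamatsu lemma, exact version, envelope form (Theorem 3.3(2))**: if `𝒳` is closed
under `ℰ`-extensions and `f : A ⟶ X` is a monomorphic `𝒳`-envelope, then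
`Coker f ∈ ^⊥𝒳`, i.e. every conflation `0 → X' → M → Coker f → 0` with `X' ∈ 𝒳`
splits. -/
theorem wakamatsu_envelope
    {𝒜 : Type u} [CategoryTheory.Category.{v} 𝒜] [CategoryTheory.Abelian 𝒜]
    (E : ExactStructure 𝒜)
    (hproj : E.EnoughProjectives) (hinj : E.EnoughInjectives)
    (𝒳 : Set 𝒜) (hext : E.ClosedUnderExtensions 𝒳)
    {A X : 𝒜} (f : A ⟶ X) (hmono : CategoryTheory.Mono f) (henv : IsEnvelope 𝒳 f) :
    CategoryTheory.Limits.cokernel f ∈ E.leftPerp 𝒳 := by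
  exact wakamatsu_envelope_general E 𝒳 hext f henv
end

section
/- Let ℰ be an exact structure on an abelian category 𝒜 such that 𝒜 has enough ℰ-projectives and enough ℰ-injectives, and let (𝒳,𝒴) be a pair of classes of objects of 𝒜 closed under isomorphisms and direct summands. Suppose 𝒴 is ℰ-coresolving, 𝒳 = ^⊥𝒴, and every object A of 𝒜 admits a monomorphic 𝒴-preenvelope j : A → Y with Coker j ∈ 𝒳. Then 𝒳 is ℰ-resolving, 𝒴 = 𝒳^⊥, and every object A of 𝒜 admits an epimorphic 𝒳-precover p : X → A with Ker p ∈ 𝒴. -/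
open CategoryTheory Category Limits

universe v u

/-!
With enough injectives, a `𝒴`-preenvelope `j` of `A` is an admissible monic, because an admissible
monic from `A` into an injective factors through `j`. Hence every object `A` has a conflation
`A → Y → X` with `Y ∈ 𝒴` and `X ∈ 𝒳`; if `A ∈ 𝒳^⊥`, it splits, so `A ∈ 𝒴`. Shifting dimension along a
conflation `Y → I → Y'` with `I` injective, where `Y' ∈ 𝒴` because `𝒴` is coresolving, shows that
`^⊥𝒴` is resolving. Salce's trick then produces the precovers: given `K → P → A` with `P` projective
and `K → Y → X` as above, the pushout `P ⊔_K Y` is an extension of `X` by `P`, hence lies in `𝒳`,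
and maps onto `A` with kernel `Y`.
-/

namespace ExactPaper

variable {𝒜 : Type u} [Category.{v} 𝒜] [Abelian 𝒜]

theorem shortExact_of_isPushout {S : ShortComplex 𝒜} (hS : S.ShortExact) {N Q : 𝒜}
    {f : S.X₁ ⟶ N} {a : S.X₂ ⟶ Q} {b : N ⟶ Q} (sq : IsPushout S.f f a b) {d : Q ⟶ S.X₃}
    (had : a ≫ d = S.g) (hbd : b ≫ d = 0) : (ShortComplex.mk b d hbd).ShortExact := by
  have := hS.mono_f
  have := hS.epi_g
  have : Mono b := Abelian.mono_inr_of_isColimit _ _ sq.isColimit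
  have : Epi d := epi_of_epi_fac had
  refine ⟨ShortComplex.exact_of_g_is_cokernel _
    (CokernelCofork.IsColimit.ofπ' d hbd fun k hk ↦ ?_)⟩
  have hak : S.f ≫ a ≫ k = 0 := by rw [sq.w_assoc, hk, comp_zero]
  refine ⟨hS.exact.desc (a ≫ k) hak, sq.hom_ext ?_ ?_⟩
  · rw [reassoc_of% had, hS.exact.g_desc]
  · rw [reassoc_of% hbd, zero_comp, hk]

theorem shortExact_of_isPullback {S : ShortComplex 𝒜} (hS : S.ShortExact) {N Q : 𝒜}
    {f : N ⟶ S.X₃} {a : Q ⟶ S.X₂} {b : Q ⟶ N} (sq : IsPullback a b S.g f) {d : S.X₁ ⟶ Q}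
    (hda : d ≫ a = S.f) (hdb : d ≫ b = 0) : (ShortComplex.mk d b hdb).ShortExact := by
  have := hS.mono_f
  have := hS.epi_g
  have : Mono d := mono_of_mono_fac hda
  have : Epi b := Abelian.epi_snd_of_isLimit _ _ sq.isLimit
  refine ⟨ShortComplex.exact_of_f_is_kernel _
    (KernelFork.IsLimit.ofι' d hdb fun k hk ↦ ?_)⟩
  have hka : (k ≫ a) ≫ S.g = 0 := by rw [assoc, sq.w, reassoc_of% hk, zero_comp]
  refine ⟨hS.exact.lift (k ≫ a) hka, sq.hom_ext ?_ ?_⟩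
  · rw [assoc, hda, hS.exact.lift_f]
  · rw [assoc, hdb, comp_zero, hk]

namespace ExactStructure

variable {E : ExactStructure 𝒜} {S T : ShortComplex 𝒜}

theorem conflation_of_shortExact_of_admMono (hS : S.ShortExact) (hf : AdmMono E.conflation S.f) :
    E.conflation S := by
  obtain ⟨Z, g, w, hT⟩ := hf
  let e : Z ≅ S.X₃ :=
    (E.shortExact_of_conflation _ hT).gIsCokernel.coconePointUniqueUpToIso hS.gIsCokernel
  have hge : g ≫ e.hom = S.g :=
    (E.shortExact_of_conflation _ hT).gIsCokernel.comp_coconePointUniqueUpToIso_hom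
      hS.gIsCokernel WalkingParallelPair.one
  refine E.conflation_of_iso _ _ ?_ hT
  exact ShortComplex.isoMk (Iso.refl _) (Iso.refl _) e (by simp) (by simp [hge])

theorem conflation_of_shortExact_of_admEpi (hS : S.ShortExact) (hg : AdmEpi E.conflation S.g) :
    E.conflation S := by
  obtain ⟨Z, f, w, hT⟩ := hg
  let e : Z ≅ S.X₁ :=
    (E.shortExact_of_conflation _ hT).fIsKernel.conePointUniqueUpToIso hS.fIsKernel
  have hef : e.hom ≫ S.f = f :=
    (E.shortExact_of_conflation _ hT).fIsKernel.conePointUniqueUpToIso_hom_comp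
      hS.fIsKernel WalkingParallelPair.zero
  refine E.conflation_of_iso _ _ ?_ hT
  exact ShortComplex.isoMk e (Iso.refl _) (Iso.refl _) (by simp [hef]) (by simp)

theorem admMono_of_isPushout_s6 {A B N Q : 𝒜} {i : A ⟶ B} {f : A ⟶ N} {a : B ⟶ Q} {b : N ⟶ Q}
    (sq : IsPushout i f a b) (hi : AdmMono E.conflation i) : AdmMono E.conflation b := by
  obtain ⟨Z, g, w, h⟩ := E.admMono_pushout i f hi
  refine ⟨Z, sq.isoPushout.hom ≫ g, by simp [w], E.conflation_of_iso _ _ ?_ h⟩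
  exact ShortComplex.isoMk (Iso.refl _) sq.isoPushout.symm (Iso.refl _) (by simp) (by simp)

theorem admEpi_of_isPullback_s6 {B M N Q : 𝒜} {p : B ⟶ M} {f : N ⟶ M} {a : Q ⟶ B} {b : Q ⟶ N}
    (sq : IsPullback a b p f) (hp : AdmEpi E.conflation p) : AdmEpi E.conflation b := by
  obtain ⟨Z, k, w, h⟩ := E.admEpi_pullback p f hp
  refine ⟨Z, k ≫ sq.isoPullback.inv, by simp [w], E.conflation_of_iso _ _ ?_ h⟩
  exact ShortComplex.isoMk (Iso.refl _) sq.isoPullback.symm (Iso.refl _) (by simp) (by simp)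

theorem conflation_of_isPushout (hS : E.conflation S) {N Q : 𝒜} {f : S.X₁ ⟶ N} {a : S.X₂ ⟶ Q}
    {b : N ⟶ Q} (sq : IsPushout S.f f a b) {d : Q ⟶ S.X₃} (had : a ≫ d = S.g)
    (hbd : b ≫ d = 0) : E.conflation (ShortComplex.mk b d hbd) :=
  conflation_of_shortExact_of_admMono
    (shortExact_of_isPushout (E.shortExact_of_conflation _ hS) sq had hbd)
    (admMono_of_isPushout_s6 sq ⟨_, S.g, S.zero, hS⟩)

theorem conflation_of_isPullback (hS : E.conflation S) {N Q : 𝒜} {f : N ⟶ S.X₃} {a : Q ⟶ S.X₂}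
    {b : Q ⟶ N} (sq : IsPullback a b S.g f) {d : S.X₁ ⟶ Q} (hda : d ≫ a = S.f)
    (hdb : d ≫ b = 0) : E.conflation (ShortComplex.mk d b hdb) :=
  conflation_of_shortExact_of_admEpi
    (shortExact_of_isPullback (E.shortExact_of_conflation _ hS) sq hda hdb)
    (admEpi_of_isPullback_s6 sq ⟨_, S.f, S.zero, hS⟩)

theorem conflation_of_hom_of_isIso_τ₁ (hT : E.conflation T) (hS : S.ShortExact) (φ : S ⟶ T)
    [IsIso φ.τ₁] : E.conflation S := by
  let d : T.X₁ ⟶ pullback T.g φ.τ₃ := pullback.lift T.f 0 (by simp)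
  have hd : d ≫ pullback.snd T.g φ.τ₃ = 0 := pullback.lift_snd _ _ _
  have hP : E.conflation (ShortComplex.mk d (pullback.snd T.g φ.τ₃) hd) :=
    conflation_of_isPullback hT (.of_hasPullback _ _) (pullback.lift_fst _ _ _) hd
  let ψ : S ⟶ ShortComplex.mk d (pullback.snd T.g φ.τ₃) hd :=
    { τ₁ := φ.τ₁
      τ₂ := pullback.lift φ.τ₂ S.g φ.comm₂₃
      τ₃ := 𝟙 S.X₃
      comm₁₂ := by
        apply pullback.hom_ext
        · rw [assoc, assoc, pullback.lift_fst, pullback.lift_fst, φ.comm₁₂]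
        · rw [assoc, assoc, pullback.lift_snd, pullback.lift_snd, comp_zero, S.zero]
      comm₂₃ := by rw [pullback.lift_snd, comp_id] }
  have : IsIso ψ.τ₁ := inferInstanceAs (IsIso φ.τ₁)
  have : IsIso ψ.τ₃ := inferInstanceAs (IsIso (𝟙 S.X₃))
  have : IsIso ψ.τ₂ :=
    ShortComplex.isIso₂_of_shortExact_of_isIso₁₃ ψ hS (E.shortExact_of_conflation _ hP)
  have : IsIso ψ := ShortComplex.isIso_of_isIso ψ
  exact E.conflation_of_iso _ _ (asIso ψ).symm hP

/-- Quillen's obscure axiom. -/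
theorem conflation_cokernel_of_admMono_comp {A Y I : 𝒜} {j : A ⟶ Y} {h : Y ⟶ I}
    (hjh : AdmMono E.conflation (j ≫ h)) :
    E.conflation (ShortComplex.mk j (cokernel.π j) (cokernel.condition j)) := by
  obtain ⟨C, q, w, hT⟩ := hjh
  have : Mono (j ≫ h) := (E.shortExact_of_conflation _ hT).mono_f
  have : Mono j := mono_of_mono j h
  let φ : ShortComplex.mk j (cokernel.π j) (cokernel.condition j) ⟶ ShortComplex.mk (j ≫ h) q w :=
    { τ₁ := 𝟙 A
      τ₂ := h
      τ₃ := cokernel.desc j (h ≫ q) (by rw [← assoc, w]) }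
  have : IsIso φ.τ₁ := inferInstanceAs (IsIso (𝟙 A))
  exact conflation_of_hom_of_isIso_τ₁ hT ⟨ShortComplex.exact_cokernel j⟩ φ

theorem conflation_cokernel_of_isPreenvelope (hinj : E.EnoughInjectives) {𝒴 : Set 𝒜}
    (h𝒴 : ∀ I, E.EInjective I → I ∈ 𝒴) {A Y : 𝒜} {j : A ⟶ Y} (hj : IsPreenvelope 𝒴 j) :
    E.conflation (ShortComplex.mk j (cokernel.π j) (cokernel.condition j)) := by
  obtain ⟨I, C, i, p, w, hc, hI⟩ := hinj A
  obtain ⟨h, rfl⟩ := hj.2 I (h𝒴 I hI) i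
  exact conflation_cokernel_of_admMono_comp ⟨C, p, w, hc⟩

theorem exists_extension_of_ext1Zero (hS : E.conflation S) {N : 𝒜} (h : E.Ext1Zero S.X₃ N)
    (f : S.X₁ ⟶ N) : ∃ g : S.X₂ ⟶ N, S.f ≫ g = f := by
  have hd : pushout.inr S.f f ≫ pushout.desc S.g 0 (by simp) = 0 := pushout.inr_desc _ _ _
  obtain ⟨r, hr⟩ := h _ _ _ hd
    (conflation_of_isPushout hS (.of_hasPushout _ _) (pushout.inl_desc _ _ _) hd)
  exact ⟨pushout.inl S.f f ≫ r, by rw [pushout.condition_assoc, hr, comp_id]⟩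

theorem exists_lift_of_ext1Zero (hS : E.conflation S) {M : 𝒜} (h : E.Ext1Zero M S.X₁)
    (f : M ⟶ S.X₃) : ∃ g : M ⟶ S.X₂, g ≫ S.g = f := by
  have hd : pullback.lift S.f 0 (by simp) ≫ pullback.snd S.g f = 0 := pullback.lift_snd _ _ _
  have hP := conflation_of_isPullback hS (.of_hasPullback _ _) (pullback.lift_fst _ _ _) hd
  obtain ⟨r, hr⟩ := h _ _ _ hd hP
  have hexact := E.shortExact_of_conflation _ hP
  let σ := ShortComplex.Splitting.ofExactOfRetraction _ hexact.exact r hr hexact.epi_g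
  have hσ : σ.s ≫ pullback.snd S.g f = 𝟙 M := σ.s_g
  exact ⟨σ.s ≫ pullback.fst S.g f, by rw [assoc, pullback.condition, reassoc_of% hσ]⟩

theorem ext1Zero_of_eInjective_of_forall_exists_lift {M : 𝒜} (hS : E.conflation S)
    (hI : E.EInjective S.X₂) (h : ∀ f : M ⟶ S.X₃, ∃ g : M ⟶ S.X₂, g ≫ S.g = f) :
    E.Ext1Zero M S.X₁ := by
  intro Z i p w hT
  have hS' := E.shortExact_of_conflation _ hS
  have hT' := E.shortExact_of_conflation _ hT
  have := hS'.mono_f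
  have := hT'.epi_g
  obtain ⟨k, hk : i ≫ k = S.f⟩ := hI _ hT S.f
  obtain ⟨f, hf : p ≫ f = k ≫ S.g⟩ := hT'.exact.desc' (k ≫ S.g) (by simp [reassoc_of% hk])
  obtain ⟨g, hg⟩ := h f
  obtain ⟨r, hr⟩ := hS'.exact.lift' (k - p ≫ g) (by simp [hg, hf])
  refine ⟨r, ?_⟩
  rw [← cancel_mono S.f, assoc, hr]
  simp [hk, reassoc_of% w]

theorem EProjective.ext1Zero {P : 𝒜} (hP : E.EProjective P) (N : 𝒜) : E.Ext1Zero P N := by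
  intro Z i p w hT
  have hT' := E.shortExact_of_conflation _ hT
  obtain ⟨s, hs⟩ := hP _ hT (𝟙 P)
  let σ := ShortComplex.Splitting.ofExactOfSection _ hT'.exact s hs hT'.mono_f
  exact ⟨σ.r, σ.f_r⟩

theorem Ext1Zero.of_extension {N : 𝒜} (hS : E.conflation S) (h₁ : E.Ext1Zero S.X₁ N)
    (h₃ : E.Ext1Zero S.X₃ N) : E.Ext1Zero S.X₂ N := by
  intro Z i p w hT
  -- `K` is the preimage of `S.X₁` in `Z`: the extension splits over `S.X₁`, which gives a
  -- retraction `K ⟶ N`, and this retraction extends to `Z` because `Z / K ≅ S.X₃`.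
  obtain ⟨K, k, hk, hK⟩ := E.admEpi_comp p S.g ⟨_, i, w, hT⟩ ⟨_, S.f, S.zero, hS⟩
  have hS' := E.shortExact_of_conflation _ hS
  have hT' := E.shortExact_of_conflation _ hT
  have hK' := E.shortExact_of_conflation _ hK
  have : Mono S.f := hS'.mono_f
  have : Mono i := hT'.mono_f
  have : Mono k := hK'.mono_f
  obtain ⟨l, hl⟩ := hS'.exact.lift' (k ≫ p) (by rw [assoc, hk])
  obtain ⟨m, hm : m ≫ k = i⟩ := hK'.exact.lift' i (by simp [reassoc_of% w])
  have hml : m ≫ l = 0 := by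
    rw [← cancel_mono S.f, assoc, hl, reassoc_of% hm, w, zero_comp]
  obtain ⟨a, ha : a ≫ p = S.f⟩ := exists_lift_of_ext1Zero hT h₁ S.f
  obtain ⟨ρ, hρ : ρ ≫ i = k - l ≫ a⟩ := hT'.exact.lift' (k - l ≫ a) (by simp [ha, hl])
  have hmρ : m ≫ ρ = 𝟙 N := by
    rw [← cancel_mono i, assoc, hρ]
    simp [hm, reassoc_of% hml]
  obtain ⟨r, hr : k ≫ r = ρ⟩ := exists_extension_of_ext1Zero hK h₃ ρ
  exact ⟨r, by rw [← hm, assoc, hr, hmρ]⟩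

theorem Ext1Zero.of_dimension_shift (hS : E.conflation S) (hT : E.conflation T)
    (hI : E.EInjective T.X₂) (h₂ : E.Ext1Zero S.X₂ T.X₁) (h₃ : E.Ext1Zero S.X₃ T.X₃) :
    E.Ext1Zero S.X₁ T.X₁ := by
  refine ext1Zero_of_eInjective_of_forall_exists_lift hT hI fun f ↦ ?_
  obtain ⟨g, hg⟩ := exists_extension_of_ext1Zero hS h₃ f
  obtain ⟨k, hk⟩ := exists_lift_of_ext1Zero hT h₂ g
  exact ⟨S.f ≫ k, by rw [assoc, hk, hg]⟩

theorem closedUnderExtensions_leftPerp (𝒴 : Set 𝒜) : E.ClosedUnderExtensions (E.leftPerp 𝒴) :=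
  fun _ hS h₁ h₃ Y hY ↦ .of_extension hS (h₁ Y hY) (h₃ Y hY)

theorem Coresolving.resolving_leftPerp {𝒴 : Set 𝒜} (h𝒴 : E.Coresolving 𝒴)
    (hinj : E.EnoughInjectives) : E.Resolving (E.leftPerp 𝒴) := by
  refine ⟨fun P hP Y _ ↦ hP.ext1Zero Y, closedUnderExtensions_leftPerp 𝒴,
    fun S hS h₂ h₃ Y hY ↦ ?_⟩
  obtain ⟨h𝒴inj, -, h𝒴coker⟩ := h𝒴
  obtain ⟨I, C, i, p, w, hT, hI⟩ := hinj Y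
  exact .of_dimension_shift hS hT hI (h₂ Y hY) (h₃ C (h𝒴coker _ hT hY (h𝒴inj I hI)))

variable (E) in
/-- Every object `A` is the left end of a conflation `A → Y → X` with `Y ∈ 𝒴` and `X ∈ 𝒳`. When
`𝒳 ⊆ ^⊥𝒴` this says that `A` has a special `𝒴`-preenvelope; no orthogonality is built in. -/
def HasSpecialPreenvelopes (𝒳 𝒴 : Set 𝒜) : Prop :=
  ∀ A : 𝒜, ∃ (Y X : 𝒜) (j : A ⟶ Y) (q : Y ⟶ X) (w : j ≫ q = 0),
    E.conflation (ShortComplex.mk j q w) ∧ Y ∈ 𝒴 ∧ X ∈ 𝒳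

variable (E) in
/-- Every object `A` is the right end of a conflation `Y → X → A` with `Y ∈ 𝒴` and `X ∈ 𝒳`. When
`𝒴 ⊆ 𝒳^⊥` this says that `A` has a special `𝒳`-precover; no orthogonality is built in. -/
def HasSpecialPrecovers (𝒳 𝒴 : Set 𝒜) : Prop :=
  ∀ A : 𝒜, ∃ (Y X : 𝒜) (i : Y ⟶ X) (p : X ⟶ A) (w : i ≫ p = 0),
    E.conflation (ShortComplex.mk i p w) ∧ Y ∈ 𝒴 ∧ X ∈ 𝒳

variable {𝒳 𝒴 : Set 𝒜}

theorem HasSpecialPreenvelopes.eq_rightPerp (h : E.HasSpecialPreenvelopes 𝒳 𝒴)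
    (h𝒴 : ClosedUnderDirectSummands 𝒴) (horth : 𝒴 ⊆ E.rightPerp 𝒳) : 𝒴 = E.rightPerp 𝒳 := by
  refine horth.antisymm fun N hN ↦ ?_
  obtain ⟨Y, X, j, q, w, hc, hY, hX⟩ := h N
  obtain ⟨r, hr⟩ := hN X hX Y j q w hc
  exact h𝒴 Y N ⟨j, r, hr⟩ hY

theorem HasSpecialPreenvelopes.hasSpecialPrecovers (h : E.HasSpecialPreenvelopes 𝒳 𝒴)
    (hproj : E.EnoughProjectives) (h𝒳proj : ∀ P, E.EProjective P → P ∈ 𝒳)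
    (h𝒳ext : E.ClosedUnderExtensions 𝒳) : E.HasSpecialPrecovers 𝒳 𝒴 := by
  intro A
  obtain ⟨K, P, i, p, wip, hP, hPproj⟩ := hproj A
  obtain ⟨Y, X, j, q, wjq, hY, hY𝒴, hX𝒳⟩ := h K
  have sq := IsPushout.of_hasPushout i j
  have hker : pushout.inr i j ≫ pushout.desc p 0 (by rw [wip, comp_zero]) = 0 :=
    pushout.inr_desc _ _ _
  have hcoker : pushout.inl i j ≫ pushout.desc 0 q (by rw [wjq, comp_zero]) = 0 :=
    pushout.inl_desc _ _ _
  have hYA := conflation_of_isPushout hP sq (pushout.inl_desc _ _ _) hker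
  have hPX := conflation_of_isPushout hY sq.flip (pushout.inr_desc _ _ _) hcoker
  exact ⟨Y, pushout i j, _, _, hker, hYA, hY𝒴, h𝒳ext _ hPX (h𝒳proj P hPproj) hX𝒳⟩

theorem isPrecover_of_conflation (hS : E.conflation S) (h₁ : S.X₁ ∈ E.rightPerp 𝒳)
    (h₂ : S.X₂ ∈ 𝒳) : IsPrecover 𝒳 S.g :=
  ⟨h₂, fun X' hX' g ↦ exists_lift_of_ext1Zero hS (h₁ X' hX') g⟩

theorem HasSpecialPrecovers.exists_epi_isPrecover (h : E.HasSpecialPrecovers 𝒳 𝒴)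
    (h𝒴 : ClosedUnderIsos 𝒴) (horth : 𝒴 ⊆ E.rightPerp 𝒳) (A : 𝒜) :
    ∃ (X : 𝒜) (p : X ⟶ A), Epi p ∧ IsPrecover 𝒳 p ∧ kernel p ∈ 𝒴 := by
  obtain ⟨Y, X, i, p, w, hc, hY, hX⟩ := h A
  have hexact := E.shortExact_of_conflation _ hc
  refine ⟨X, p, hexact.epi_g, isPrecover_of_conflation hc (horth hY) hX, ?_⟩
  exact h𝒴 _ _ (hexact.fIsKernel.conePointUniqueUpToIso (limit.isLimit _)) hY

end ExactStructure

end ExactPaper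

open ExactPaper CategoryTheory Limits in
/-- **Theorem 3.4, (2) ⇒ (1)**: if `𝒴` is `ℰ`-coresolving, `𝒳 = ^⊥𝒴`, and every object
admits a monomorphic `𝒴`-preenvelope with cokernel in `𝒳`, then `𝒳` is `ℰ`-resolving,
`𝒴 = 𝒳^⊥`, and every object admits an epimorphic `𝒳`-precover with kernel in `𝒴`. -/
theorem resolving_of_coresolving
    {𝒜 : Type u} [Category.{v} 𝒜] [Abelian 𝒜]
    (E : ExactStructure 𝒜)
    (hproj : E.EnoughProjectives) (hinj : E.EnoughInjectives)
    (𝒳 𝒴 : Set 𝒜)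
    (hXiso : ClosedUnderIsos 𝒳) (hXsum : ClosedUnderDirectSummands 𝒳)
    (hYiso : ClosedUnderIsos 𝒴) (hYsum : ClosedUnderDirectSummands 𝒴)
    (hcores : E.Coresolving 𝒴) (hperp : 𝒳 = E.leftPerp 𝒴)
    (henv : ∀ A : 𝒜, ∃ (Y : 𝒜) (j : A ⟶ Y),
      Mono j ∧ IsPreenvelope 𝒴 j ∧ cokernel j ∈ 𝒳) :
    E.Resolving 𝒳 ∧ 𝒴 = E.rightPerp 𝒳 ∧
      ∀ A : 𝒜, ∃ (X : 𝒜) (p : X ⟶ A), Epi p ∧ IsPrecover 𝒳 p ∧ kernel p ∈ 𝒴 := by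
  have hspecial : E.HasSpecialPreenvelopes 𝒳 𝒴 := fun A ↦
    let ⟨Y, j, _, hj, hX⟩ := henv A
    ⟨Y, cokernel j, j, cokernel.π j, cokernel.condition j,
      ExactStructure.conflation_cokernel_of_isPreenvelope hinj hcores.1 hj, hj.1, hX⟩
  have hres : E.Resolving 𝒳 := hperp ▸ hcores.resolving_leftPerp hinj
  have horth : 𝒴 ⊆ E.rightPerp 𝒳 := fun Y hY X hX ↦ (hperp ▸ hX : X ∈ E.leftPerp 𝒴) Y hY
  have hprecov := hspecial.hasSpecialPrecovers hproj hres.1 hres.2.1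
  exact ⟨hres, hspecial.eq_rightPerp hYsum horth, hprecov.exists_epi_isPrecover hYiso horth⟩
end

section
/- Let ℰ be an exact structure on an abelian category 𝒜 such that 𝒜 has enough ℰ-projectives and enough ℰ-injectives. If 𝒳 is an ℰ-resolving class of objects such that every object of 𝒜 admits an epimorphic 𝒳-cover, then every object A of 𝒜 admits a monomorphic 𝒳^⊥-preenvelope j : A → Y with Coker j ∈ 𝒳. -/
open CategoryTheory Category Limits

universe v u

/-!
Call a monomorphism an `𝒳`-inflation if it is the kernel in a conflation with cokernel in `𝒳`. An
object is in `𝒳^⊥` if and only if every morphism to it extends along all `𝒳`-inflations, so an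
`𝒳`-inflation `A ⟶ Y` with `Y ∈ 𝒳^⊥` is an `𝒳^⊥`-preenvelope of `A`.

The key point, a form of Wakamatsu's lemma, is that for extension-closed `𝒳` an `𝒳`-cover
`f : X ⟶ C` has the right lifting property against `𝒳`-inflations: pushing an `𝒳`-inflation out
along a morphism to `X` gives an `𝒳`-inflation `X ⟶ W` with `W ∈ 𝒳`, and this splits over `C`
because `f` is a cover. Now take a conflation `A ⟶ I ⟶ C` with `I` injective and pull it back along
an `𝒳`-cover `X ⟶ C` to get `A ⟶ Y ⟶ X`. The lifting property passes to the base change `Y ⟶ I`,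
and therefore `Y ∈ 𝒳^⊥` because `I ∈ 𝒳^⊥`.
-/

namespace ExactPaper

variable {𝒜 : Type u} [Category.{v} 𝒜] [Abelian 𝒜]

namespace ExactStructure

variable {E : ExactStructure 𝒜} {𝒳 : Set 𝒜}

lemma exists_conflation_pushout_inr {S : ShortComplex 𝒜} (hS : E.conflation S) {B : 𝒜}
    (f : S.X₁ ⟶ B) :
    ∃ (q : pushout S.f f ⟶ S.X₃) (w : pushout.inr S.f f ≫ q = 0),
      E.conflation (ShortComplex.mk (pushout.inr S.f f) q w) := by
  obtain ⟨Z, q, w, hq⟩ := E.admMono_pushout S.f f ⟨_, S.g, S.zero, hS⟩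
  have := isIso_cokernel_map_of_isPushout (IsPushout.of_hasPushout S.f f)
  let e : Z ≅ S.X₃ :=
    (E.shortExact_of_conflation _ hq).gIsCokernel.coconePointUniqueUpToIso (cokernelIsCokernel _) ≪≫
      (asIso (cokernel.map _ _ _ _ pushout.condition)).symm ≪≫
      (cokernelIsCokernel _).coconePointUniqueUpToIso
        (E.shortExact_of_conflation _ hS).gIsCokernel
  exact ⟨q ≫ e.hom, by rw [← assoc, w, zero_comp],
    E.conflation_of_iso (ShortComplex.mk _ q w) _
      (ShortComplex.isoMk (Iso.refl _) (Iso.refl _) e) hq⟩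

lemma exists_conflation_pullback_snd {S : ShortComplex 𝒜} (hS : E.conflation S) {X : 𝒜}
    (f : X ⟶ S.X₃) :
    ∃ (j : S.X₁ ⟶ pullback S.g f) (w : j ≫ pullback.snd S.g f = 0),
      E.conflation (ShortComplex.mk j (pullback.snd S.g f) w) := by
  obtain ⟨K, k, w, hk⟩ := E.admEpi_pullback S.g f ⟨_, S.f, S.zero, hS⟩
  have := isIso_kernel_map_of_isPullback (IsPullback.of_hasPullback S.g f).flip
  let e : K ≅ S.X₁ :=
    (E.shortExact_of_conflation _ hk).fIsKernel.conePointUniqueUpToIso (kernelIsKernel _) ≪≫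
      asIso (kernel.map _ _ _ _ pullback.condition.symm) ≪≫
      (kernelIsKernel _).conePointUniqueUpToIso (E.shortExact_of_conflation _ hS).fIsKernel
  exact ⟨e.inv ≫ k, by rw [assoc, w, comp_zero],
    E.conflation_of_iso (ShortComplex.mk k _ w) _
      (ShortComplex.isoMk e (Iso.refl _) (Iso.refl _)) hk⟩

variable (E 𝒳) in
/-- The `𝒳`-inflations: admissible monics whose cokernel lies in `𝒳`. The cokernel is the third
term of some conflation, not the chosen `cokernel i`, which matters when `𝒳` is not closed under
isomorphisms. -/
def inflations : MorphismProperty 𝒜 := fun _ B i ↦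
  ∃ (Z : 𝒜) (q : B ⟶ Z) (w : i ≫ q = 0), E.conflation (ShortComplex.mk i q w) ∧ Z ∈ 𝒳

lemma mono_of_inflations {A B : 𝒜} {i : A ⟶ B} (hi : E.inflations 𝒳 i) : Mono i := by
  obtain ⟨_, _, _, hc, -⟩ := hi
  exact (E.shortExact_of_conflation _ hc).mono_f

lemma cokernel_mem_of_inflations (h𝒳 : ClosedUnderIsos 𝒳) {A B : 𝒜} {i : A ⟶ B}
    (hi : E.inflations 𝒳 i) : cokernel i ∈ 𝒳 := by
  obtain ⟨Z, _, _, hc, hZ⟩ := hi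
  exact h𝒳 Z _ ((E.shortExact_of_conflation _ hc).gIsCokernel.coconePointUniqueUpToIso
    (colimit.isColimit _)) hZ

lemma inflations_pushout_inr {A B X : 𝒜} {i : A ⟶ B} (hi : E.inflations 𝒳 i) (f : A ⟶ X) :
    E.inflations 𝒳 (pushout.inr i f) := by
  obtain ⟨Z, _, _, hc, hZ⟩ := hi
  obtain ⟨q, w, hq⟩ := exists_conflation_pushout_inr hc f
  exact ⟨Z, q, w, hq, hZ⟩

lemma ClosedUnderExtensions.mem_of_inflations (hext : E.ClosedUnderExtensions 𝒳) {A B : 𝒜}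
    {i : A ⟶ B} (hi : E.inflations 𝒳 i) (hA : A ∈ 𝒳) : B ∈ 𝒳 := by
  obtain ⟨_, _, _, hc, hZ⟩ := hi
  exact hext _ hc hA hZ

lemma ClosedUnderExtensions.closedUnderIsos (hext : E.ClosedUnderExtensions 𝒳) {Z : 𝒜}
    (hZ : IsZero Z) (hZ𝒳 : Z ∈ 𝒳) : ClosedUnderIsos 𝒳 := by
  intro X Y e hX
  refine hext (ShortComplex.mk e.hom (0 : Y ⟶ Z) comp_zero) ?_ hX hZ𝒳
  exact E.conflation_of_splitting _
    { r := e.inv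
      s := 0
      s_g := hZ.eq_of_src _ _ }

lemma mem_rightPerp_iff {N : 𝒜} :
    N ∈ E.rightPerp 𝒳 ↔
      ∀ ⦃A B : 𝒜⦄ (i : A ⟶ B), E.inflations 𝒳 i → ∀ g : A ⟶ N, ∃ h : B ⟶ N, i ≫ h = g := by
  constructor
  · intro hN A B i hi g
    obtain ⟨Z, q, w, hc, hZ⟩ := inflations_pushout_inr hi g
    obtain ⟨r, hr⟩ := hN Z hZ _ _ q w hc
    exact ⟨pushout.inl i g ≫ r, by rw [pushout.condition_assoc, hr, comp_id]⟩
  · intro hN X hX Z i p w hc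
    exact hN i ⟨X, p, w, hc, hX⟩ (𝟙 N)

lemma EInjective.mem_rightPerp {I : 𝒜} (hI : E.EInjective I) : I ∈ E.rightPerp 𝒳 :=
  fun _ _ _ _ _ _ hc ↦ hI _ hc (𝟙 I)

lemma mem_rightPerp_of_rlp {N I : 𝒜} {p : N ⟶ I} (hp : (E.inflations 𝒳).rlp p)
    (hI : I ∈ E.rightPerp 𝒳) : N ∈ E.rightPerp 𝒳 := by
  rw [mem_rightPerp_iff] at hI ⊢
  intro A B i hi g
  obtain ⟨h, hh⟩ := hI i hi (g ≫ p)
  have := hp i hi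
  have sq : CommSq g i p h := ⟨hh.symm⟩
  exact ⟨sq.lift, sq.fac_left⟩

lemma isPreenvelope_of_inflations {A Y : 𝒜} {j : A ⟶ Y} (hj : E.inflations 𝒳 j)
    (hY : Y ∈ E.rightPerp 𝒳) : IsPreenvelope (E.rightPerp 𝒳) j :=
  ⟨hY, fun _ hY' g ↦ mem_rightPerp_iff.1 hY' j hj g⟩

end ExactStructure

namespace IsCover

lemma isZero_source {𝒞 : Type u} [Category.{v} 𝒞] [HasZeroMorphisms 𝒞] {𝒳 : Set 𝒞} {X C : 𝒞}
    {f : X ⟶ C} (hf : IsCover 𝒳 f) (hC : IsZero C) : IsZero X := by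
  have : IsIso (0 : X ⟶ X) := hf.2 0 (hC.eq_of_tgt _ _)
  exact IsZero.of_mono_zero X X

lemma exists_retraction_over {𝒞 : Type u} [Category.{v} 𝒞] {𝒳 : Set 𝒞} {X C W : 𝒞} {f : X ⟶ C}
    (hf : IsCover 𝒳 f) (hW : W ∈ 𝒳) (u : X ⟶ W) (m : W ⟶ C) (hum : u ≫ m = f) :
    ∃ r : W ⟶ X, u ≫ r = 𝟙 X ∧ r ≫ f = m := by
  obtain ⟨l, hl⟩ := hf.1.2 W hW m
  have hul : (u ≫ l) ≫ f = f := by rw [assoc, hl, hum]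
  have := hf.2 _ hul
  have hinv : inv (u ≫ l) ≫ f = f := by rw [IsIso.inv_comp_eq, hul]
  exact ⟨l ≫ inv (u ≫ l), by rw [← assoc, IsIso.hom_inv_id], by rw [assoc, hinv, hl]⟩

variable {E : ExactStructure 𝒜} {𝒳 : Set 𝒜} {X C : 𝒜} {f : X ⟶ C}

lemma rlp_inflations (hf : IsCover 𝒳 f) (hext : E.ClosedUnderExtensions 𝒳) :
    (E.inflations 𝒳).rlp f := by
  intro A B i hi
  refine ⟨fun {a b} sq ↦ ?_⟩
  have hW : pushout i a ∈ 𝒳 :=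
    hext.mem_of_inflations (ExactStructure.inflations_pushout_inr hi a) hf.1.1
  obtain ⟨r, hr, hrf⟩ := hf.exists_retraction_over hW (pushout.inr i a)
    (pushout.desc b f sq.w.symm) (pushout.inr_desc _ _ _)
  exact ⟨⟨{
    l := pushout.inl i a ≫ r
    fac_left := by rw [pushout.condition_assoc, hr, comp_id]
    fac_right := by rw [assoc, hrf, pushout.inl_desc] }⟩⟩

lemma pullback_mem_rightPerp (hf : IsCover 𝒳 f) (hext : E.ClosedUnderExtensions 𝒳) {I : 𝒜}
    (hI : I ∈ E.rightPerp 𝒳) (p : I ⟶ C) : pullback p f ∈ E.rightPerp 𝒳 :=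
  ExactStructure.mem_rightPerp_of_rlp
    (MorphismProperty.pullback_fst p f (hf.rlp_inflations hext)) hI

end IsCover

namespace ExactStructure

variable {E : ExactStructure 𝒜} {𝒳 : Set 𝒜}

open scoped ZeroObject in
lemma ClosedUnderExtensions.closedUnderIsos_of_covering (hext : E.ClosedUnderExtensions 𝒳)
    (hcov : ∀ A : 𝒜, ∃ (X : 𝒜) (f : X ⟶ A), IsCover 𝒳 f) : ClosedUnderIsos 𝒳 := by
  obtain ⟨Z, f, hf⟩ := hcov 0
  exact hext.closedUnderIsos (hf.isZero_source (isZero_zero 𝒜)) hf.1.1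

lemma exists_inflations_mem_rightPerp (hext : E.ClosedUnderExtensions 𝒳) {S : ShortComplex 𝒜}
    (hS : E.conflation S) (hI : S.X₂ ∈ E.rightPerp 𝒳) {X : 𝒜} {f : X ⟶ S.X₃}
    (hf : IsCover 𝒳 f) :
    ∃ (Y : 𝒜) (j : S.X₁ ⟶ Y), E.inflations 𝒳 j ∧ Y ∈ E.rightPerp 𝒳 := by
  obtain ⟨j, w, hj⟩ := exists_conflation_pullback_snd hS f
  exact ⟨_, j, ⟨X, _, w, hj, hf.1.1⟩, hf.pullback_mem_rightPerp hext hI S.g⟩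

end ExactStructure

end ExactPaper

open ExactPaper ExactStructure in
theorem preenvelope_of_epiCovering_resolving_general
    {𝒜 : Type u} [Category.{v} 𝒜] [Abelian 𝒜] (E : ExactStructure 𝒜) (hinj : E.EnoughInjectives)
    (𝒳 : Set 𝒜) (hext : E.ClosedUnderExtensions 𝒳)
    (hcov : ∀ A : 𝒜, ∃ (X : 𝒜) (f : X ⟶ A), IsCover 𝒳 f) (A : 𝒜) :
    ∃ (Y : 𝒜) (j : A ⟶ Y), Mono j ∧ IsPreenvelope (E.rightPerp 𝒳) j ∧ cokernel j ∈ 𝒳 := by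
  obtain ⟨I, C, i, p, w, hc, hI⟩ := hinj A
  obtain ⟨X, f, hf⟩ := hcov C
  obtain ⟨Y, j, hj, hY⟩ := exists_inflations_mem_rightPerp hext hc hI.mem_rightPerp hf
  exact ⟨Y, j, mono_of_inflations hj, isPreenvelope_of_inflations hj hY,
    cokernel_mem_of_inflations (hext.closedUnderIsos_of_covering hcov) hj⟩

open ExactPaper CategoryTheory Limits in
/-- **Corollary 3.5(1)**: if `𝒳` is an `ℰ`-resolving class such that every object admits
an epimorphic `𝒳`-cover, then every object `A` admits a monomorphic `𝒳^⊥`-preenvelope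
`j : A ⟶ Y` with `Coker j ∈ 𝒳`. -/
theorem preenvelope_of_epiCovering_resolving
    {𝒜 : Type u} [Category.{v} 𝒜] [Abelian 𝒜]
    (E : ExactStructure 𝒜)
    (hproj : E.EnoughProjectives) (hinj : E.EnoughInjectives)
    (𝒳 : Set 𝒜) (hres : E.Resolving 𝒳)
    (hcov : ∀ A : 𝒜, ∃ (X : 𝒜) (f : X ⟶ A), Epi f ∧ IsCover 𝒳 f) :
    ∀ A : 𝒜, ∃ (Y : 𝒜) (j : A ⟶ Y),
      Mono j ∧ IsPreenvelope (E.rightPerp 𝒳) j ∧ cokernel j ∈ 𝒳 := by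
  exact preenvelope_of_epiCovering_resolving_general E hinj 𝒳 hres.2.1 fun A ↦
    (hcov A).imp fun _ ⟨f, _, hf⟩ ↦ ⟨f, hf⟩
end
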